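/- Let p ∈ βℕ satisfy p + p = p, let m ∈ ℕ, and let U ∈ p^m, where p^m denotes the m-fold product p·p·…·p in (βℕ,·). Then there exists a sequence {x_t}_{t=1}^∞ in ℕ such that PS_m({x_t}_{t=1}^∞) ⊆ U. -/

import Mathlib

/- `ℕ+` plays the role of the paper's `ℕ = {1,2,3,…}`.  `Ultrafilter ℕ+` is `βℕ`. -/

/-- Product of ultrafilters: `U ∈ umul p q ↔ {x | {y | x*y ∈ U} ∈ q} ∈ p`. -/
def umul (p q : Ultrafilter ℕ+) : Ultrafilter ℕ+ :=
  p.bind fun x => q.map fun y => x * y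

/-- Sum of ultrafilters: `U ∈ uadd p q ↔ {x | {y | x+y ∈ U} ∈ q} ∈ p`. -/
def uadd (p q : Ultrafilter ℕ+) : Ultrafilter ℕ+ :=
  p.bind fun x => q.map fun y => x + y

/-- `upow p m` is the `m`-fold product `p·p·…·p` in `(βℕ,·)` (for `m ≥ 1`). -/
def upow (p : Ultrafilter ℕ+) : ℕ → Ultrafilter ℕ+
  | 0 => p
  | 1 => p
  | n + 2 => umul (upow p (n + 1)) p

/-- `PSm m x` is `PS_m({x_t})`: all products `∏_{i=1}^m ∑_{t ∈ F_i} x_t` where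
`F_1, …, F_m` are finite nonempty subsets of the index set with
`max F_i < min F_{i+1}`. -/
def PSm (m : ℕ) (x : ℕ → ℕ+) : Set ℕ+ :=
  {z | ∃ F : Fin m → Finset ℕ,
    (∀ i, (F i).Nonempty) ∧
    (∀ i j : Fin m, i < j → ∀ a ∈ F i, ∀ b ∈ F j, a < b) ∧
    (z : ℕ) = ∏ i, ∑ t ∈ F i, (x t : ℕ)}

/-!
Write `p^{⊗k}` for the ultrafilter on lists of length `k` whose entries are chosen one after the
other along `p`; its image under the product map is the multiplicative power `p^k`. It therefore
suffices to find a sequence whose increasing `m`-tuples of block sums lie in a given member of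
`p^{⊗m}`, which is the ultrafilter proof of the Milliken–Taylor theorem.

The terms are chosen one at a time while shrinking a set `S` of lists that belongs to `p^{⊗k}` for
every `k ≤ m`. If `S` is such a set, then for `p`-almost all `x` so is the set of those `l ∈ S`
that stay in `S` when `x` is put in front of `l` (by definition of `p^{⊗(k+1)}`) and when `x` is
added to the first entry of `l` (because `p + p = p`). Every list of block sums of the chosen
sequence is built from the empty list by these two operations, so it lies in the original `S`.
-/

open Filter

attribute [local instance] Ultrafilter.add Ultrafilter.semigroup

section TensorPow

variable {M : Type*}

/-- The `k`-th tensor power of an ultrafilter. It lives on lists rather than on `Fin k → M`, so that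
one set of lists can be tested against all powers at once; it is supported on lists of length `k`
(`eventually_length_tensorPow`). -/
def tensorPow (p : Ultrafilter M) : ℕ → Ultrafilter (List M)
  | 0 => pure []
  | k + 1 => p.bind fun x => (tensorPow p k).map (x :: ·)

theorem eventually_tensorPow_zero {p : Ultrafilter M} {P : List M → Prop} :
    (∀ᶠ l in tensorPow p 0, P l) ↔ P [] :=
  Iff.rfl

theorem eventually_tensorPow_succ {p : Ultrafilter M} {k : ℕ} {P : List M → Prop} :
    (∀ᶠ l in tensorPow p (k + 1), P l) ↔ ∀ᶠ x in p, ∀ᶠ l in tensorPow p k, P (x :: l) :=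
  Iff.rfl

theorem eventually_length_tensorPow (p : Ultrafilter M) (k : ℕ) :
    ∀ᶠ l : List M in tensorPow p k, l.length = k := by
  induction k with
  | zero => exact eventually_tensorPow_zero.2 rfl
  | succ k ih =>
    refine eventually_tensorPow_succ.2 (Eventually.of_forall fun x => ?_)
    filter_upwards [ih] with l hl
    rw [List.length_cons, hl]

theorem eventually_modifyHead_add [Add M] {p : Ultrafilter M} (hp : p + p = p) {k : ℕ}
    {P : List M → Prop} (hP : ∀ᶠ l in tensorPow p k, P l) :
    ∀ᶠ x in p, ∀ᶠ l : List M in tensorPow p k, P (l.modifyHead (x + ·)) := by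
  cases k with
  | zero => exact Eventually.of_forall fun _ => eventually_tensorPow_zero.2 hP
  | succ k =>
    have hsum : ∀ᶠ z in ↑(p + p), ∀ᶠ l in tensorPow p k, P (z :: l) := by
      rwa [hp, ← eventually_tensorPow_succ]
    exact (Ultrafilter.eventually_add p p _).1 hsum

end TensorPow

section Thinning

variable {M : Type*} {p : Ultrafilter M} {m : ℕ} {S : Set (List M)}

/-- A set of lists is large up to length `m` if it belongs to the `k`-th tensor power of `p` for
all `k ≤ m`; this is the invariant of the recursive choice of a sequence. -/
def IsLarge (p : Ultrafilter M) (m : ℕ) (S : Set (List M)) : Prop :=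
  ∀ k ≤ m, ∀ᶠ l in tensorPow p k, l ∈ S

theorem isLarge_setOf_length_eq_imp {P : List M → Prop} (hP : ∀ᶠ l in tensorPow p m, P l) :
    IsLarge p m {l | l.length = m → P l} := by
  intro k _
  rcases eq_or_ne k m with rfl | hkm
  · filter_upwards [hP] with l hl _ using hl
  · filter_upwards [eventually_length_tensorPow p k] with l hl hlm
    exact absurd (hl.symm.trans hlm) hkm

theorem IsLarge.eventually_cons_mem (hS : IsLarge p m S) {k : ℕ} (hk : k ≤ m) :
    ∀ᶠ x in p, ∀ᶠ l : List M in tensorPow p k, l.length < m → x :: l ∈ S := by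
  rcases hk.lt_or_eq with hkm | rfl
  · filter_upwards [eventually_tensorPow_succ.1 (hS (k + 1) hkm)] with x hx
    filter_upwards [hx] with l hl _ using hl
  · refine Eventually.of_forall fun x => ?_
    filter_upwards [eventually_length_tensorPow p k] with l hl hlk
    exact absurd hl hlk.ne

/-- The lists in `S` that remain in `S` when `x` is put in front or added to the first entry: what
is left of `S` after the term `x` of the sequence has been chosen. Since largeness says nothing
about lists longer than `m`, the first requirement is restricted to lists shorter than `m`. -/
def thinning [Add M] (m : ℕ) (x : M) (S : Set (List M)) : Set (List M) :=
  {l | l ∈ S ∧ (l.length < m → x :: l ∈ S) ∧ l.modifyHead (x + ·) ∈ S}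

theorem IsLarge.exists_thinning [Add M] (hp : p + p = p) (hS : IsLarge p m S) :
    ∃ x, IsLarge p m (thinning m x S) := by
  have large_level : ∀ k ∈ Set.Iic m,
      ∀ᶠ x in p, ∀ᶠ l in tensorPow p k, l ∈ thinning m x S := by
    intro k hk
    filter_upwards [hS.eventually_cons_mem hk, eventually_modifyHead_add hp (hS k hk)]
      with x hcons hadd
    exact (hS k hk).and (hcons.and hadd)
  exact ((eventually_all_finite (Set.finite_Iic m)).2 large_level).exists

theorem IsLarge.exists_seq [Add M] (hp : p + p = p) (hS : IsLarge p m S) :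
    ∃ (x : ℕ → M) (T : ℕ → Set (List M)), T 0 = S ∧ (∀ n, IsLarge p m (T n)) ∧
      ∀ n, T (n + 1) = thinning m (x n) (T n) := by
  choose next hnext using fun T : {T // IsLarge p m T} => T.2.exists_thinning hp
  let T (n : ℕ) : {T // IsLarge p m T} := (fun T => ⟨thinning m (next T) T, hnext T⟩)^[n] ⟨S, hS⟩
  refine ⟨fun n => next (T n), fun n => T n, rfl, fun n => (T n).2, fun n => ?_⟩
  simp only [T, Function.iterate_succ_apply']

end Thinning

section BlockSums

variable {M : Type*} [Add M] {x : ℕ → M}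

/-- `BlockSums x n l` says that the entries of `l` are sums of `x` over nonempty finite sets
`F₁ < F₂ < ⋯` of indices `≥ n`. As for `Hindman.FS`, the definition is inductive: index `n` is left
out, forms a block of its own, or joins the first of the later blocks. -/
inductive BlockSums (x : ℕ → M) : ℕ → List M → Prop
  | nil (n : ℕ) : BlockSums x n []
  | skip {n : ℕ} {l : List M} : BlockSums x (n + 1) l → BlockSums x n l
  | single {n : ℕ} {l : List M} : BlockSums x (n + 1) l → BlockSums x n (x n :: l)
  | add {n : ℕ} {y : M} {l : List M} :
      BlockSums x (n + 1) (y :: l) → BlockSums x n ((x n + y) :: l)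

namespace BlockSums

theorem mem_of_thinning {m : ℕ} {T : ℕ → Set (List M)} (hnil : ∀ n, [] ∈ T n)
    (hT : ∀ n, T (n + 1) = thinning m (x n) (T n)) {n : ℕ} {l : List M} (hl : BlockSums x n l)
    (hlen : l.length ≤ m) : l ∈ T n := by
  have mem_thinning {n : ℕ} {l : List M} (h : l ∈ T (n + 1)) : l ∈ thinning m (x n) (T n) :=
    hT n ▸ h
  induction hl with
  | nil n => exact hnil n
  | skip _ ih => exact (mem_thinning (ih hlen)).1
  | single _ ih => exact (mem_thinning (ih (Nat.le_of_succ_le hlen))).2.1 hlen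
  | add _ ih => exact (mem_thinning (ih hlen)).2.2

theorem antitone {k n : ℕ} {l : List M} (hkn : k ≤ n) (hl : BlockSums x n l) :
    BlockSums x k l := by
  induction hkn with
  | refl => exact hl
  | step _ ih => exact ih hl.skip

variable {N : Type*} [AddCommMonoid N]

theorem exists_cons (f : M →ₙ+ N) {k n : ℕ} {l : List M} (hl : BlockSums x n l) {F : Finset ℕ}
    (hF : F.Nonempty) (hk : ∀ t ∈ F, k ≤ t) (hn : ∀ t ∈ F, t < n) :
    ∃ y, BlockSums x k (y :: l) ∧ f y = ∑ t ∈ F, f (x t) := by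
  induction F using Finset.induction_on_min generalizing k with
  | empty => exact absurd hF Finset.not_nonempty_empty
  | insert a F ha ih =>
    obtain ⟨hka, -⟩ := (Finset.forall_mem_insert _ _ _).1 hk
    obtain ⟨han, hFn⟩ := (Finset.forall_mem_insert _ _ _).1 hn
    rcases F.eq_empty_or_nonempty with rfl | hF'
    · exact ⟨x a, (hl.antitone han).single.antitone hka, by simp⟩
    · obtain ⟨y, hy, hsum⟩ := ih hF' ha hFn
      refine ⟨x a + y, hy.add.antitone hka, ?_⟩
      rw [map_add, hsum, Finset.sum_insert fun haF => (ha a haF).false]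

theorem exists_ofFn (f : M →ₙ+ N) {m n : ℕ} {F : Fin m → Finset ℕ} (hF : ∀ i, (F i).Nonempty)
    (hlt : ∀ i j, i < j → ∀ a ∈ F i, ∀ b ∈ F j, a < b) (hn : ∀ i, ∀ t ∈ F i, n ≤ t) :
    ∃ y : Fin m → M, BlockSums x n (List.ofFn y) ∧ ∀ i, f (y i) = ∑ t ∈ F i, f (x t) := by
  induction m generalizing n with
  | zero => exact ⟨Fin.elim0, .nil n, fun i => i.elim0⟩
  | succ m ih =>
    obtain ⟨y, hy, hsum⟩ := ih (n := (F 0).max' (hF 0) + 1) (fun i => hF i.succ)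
      (fun i j hij => hlt _ _ (Fin.succ_lt_succ_iff.2 hij))
      (fun i => hlt 0 i.succ i.succ_pos _ ((F 0).max'_mem (hF 0)))
    obtain ⟨y₀, hy₀, hsum₀⟩ := hy.exists_cons f (hF 0) (hn 0)
      fun t ht => Nat.lt_succ_of_le ((F 0).le_max' t ht)
    exact ⟨Fin.cons y₀ y, by rwa [List.ofFn_cons], Fin.cases hsum₀ hsum⟩

end BlockSums

theorem exists_seq_forall_blockSums {p : Ultrafilter M} (hp : p + p = p) {m : ℕ}
    {P : List M → Prop} (hP : ∀ᶠ l in tensorPow p m, P l) :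
    ∃ x : ℕ → M, ∀ l, BlockSums x 0 l → l.length = m → P l := by
  obtain ⟨x, T, hT₀, hlarge, hT⟩ := (isLarge_setOf_length_eq_imp hP).exists_seq hp
  have nil_mem (n : ℕ) : [] ∈ T n := eventually_tensorPow_zero.1 (hlarge n 0 m.zero_le)
  refine ⟨x, fun l hl hlen => ?_⟩
  have hl₀ : l ∈ T 0 := hl.mem_of_thinning nil_mem hT hlen.le
  rw [hT₀] at hl₀
  exact hl₀ hlen

end BlockSums

theorem uadd_eq_add (p q : Ultrafilter ℕ+) : uadd p q = p + q :=
  rfl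

theorem umul_eq_mul (p q : Ultrafilter ℕ+) : umul p q = p * q :=
  rfl

theorem upow_add_two (p : Ultrafilter ℕ+) (n : ℕ) : upow p (n + 2) = p * upow p (n + 1) := by
  induction n with
  | zero => rfl
  | succ n ih =>
    calc upow p (n + 3) = upow p (n + 2) * p := umul_eq_mul _ _
      _ = p * upow p (n + 1) * p := by rw [ih]
      _ = p * (upow p (n + 1) * p) := mul_assoc _ _ _
      _ = p * upow p (n + 2) := by rw [← umul_eq_mul (upow p (n + 1)), upow]

theorem eventually_upow_succ {p : Ultrafilter ℕ+} {n : ℕ} {P : ℕ+ → Prop} :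
    (∀ᶠ z in upow p (n + 1), P z) ↔ ∀ᶠ l : List ℕ+ in tensorPow p (n + 1), P l.prod := by
  induction n generalizing P with
  | zero =>
    simp only [upow, eventually_tensorPow_succ, eventually_tensorPow_zero, List.prod_singleton]
  | succ n ih =>
    simp only [upow_add_two, Ultrafilter.eventually_mul, ih, eventually_tensorPow_succ,
      List.prod_cons]

theorem stmt_17_general {M R : Type*} [Add M] [Monoid M] [CommSemiring R] (f : M →* R)
    (hf : ∀ a b, f (a + b) = f a + f b) {p : Ultrafilter M} (hp : p + p = p) {m : ℕ} {U : Set M}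
    (hU : ∀ᶠ l : List M in tensorPow p m, l.prod ∈ U) :
    ∃ x : ℕ → M, ∀ F : Fin m → Finset ℕ, (∀ i, (F i).Nonempty) →
      (∀ i j, i < j → ∀ a ∈ F i, ∀ b ∈ F j, a < b) →
      ∃ z ∈ U, f z = ∏ i, ∑ t ∈ F i, f (x t) := by
  obtain ⟨x, hx⟩ := exists_seq_forall_blockSums hp hU
  refine ⟨x, fun F hF hlt => ?_⟩
  obtain ⟨y, hy, hsum⟩ := BlockSums.exists_ofFn (⟨f, hf⟩ : M →ₙ+ R) hF hlt
    fun _ t _ => t.zero_le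
  refine ⟨(List.ofFn y).prod, hx _ hy List.length_ofFn, ?_⟩
  calc f (List.ofFn y).prod = ∏ i, f (y i) := by
        simp only [map_list_prod, List.map_ofFn, List.prod_ofFn, Function.comp_apply]
    _ = ∏ i, ∑ t ∈ F i, f (x t) := Finset.prod_congr rfl fun i _ => hsum i

/-- Theorem 3.15: if `p ∈ βℕ` satisfies `p + p = p`, `m ∈ ℕ`
and `U ∈ p^m` (the `m`-fold product in `(βℕ,·)`), then there is a sequence
`{x_t}` in `ℕ` with `PS_m({x_t}) ⊆ U`. -/
theorem stmt_17 (p : Ultrafilter ℕ+) (hp : uadd p p = p) (m : ℕ) (hm : 0 < m)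
    (U : Set ℕ+) (hU : U ∈ upow p m) :
    ∃ x : ℕ → ℕ+, PSm m x ⊆ U := by
  obtain ⟨n, rfl⟩ := Nat.exists_eq_add_of_lt hm
  rw [zero_add] at hU ⊢
  rw [uadd_eq_add] at hp
  obtain ⟨x, hx⟩ := stmt_17_general PNat.coeMonoidHom PNat.add_coe hp (eventually_upow_succ.1 hU)
  refine ⟨x, fun z ⟨F, hF, hlt, hz⟩ => ?_⟩
  obtain ⟨w, hw, hw_eq⟩ := hx F hF hlt
  rwa [PNat.eq (hz.trans hw_eq.symm)]
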